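/- arXiv:2006.13333 — 2 statements merged into one kernel-verified Lean document; each statement's English description precedes it below -/
import Mathlib

section
/- Let A ∈ ℝ^{n×n} be symmetric and strictly k-positive, where 1 ≤ k ≤ n, with eigenvalues λ₁, …, λ_n ordered so that |λ₁| ≥ |λ₂| ≥ … ≥ |λ_n|. Then for every 1 ≤ j ≤ k, any eigenvector u_j of A corresponding to λ_j has exactly j−1 sign changes, i.e. S⁻(u_j) = S⁺(u_j) = j−1. -/
open Matrix Polynomial

/-- Number of sign changes between consecutive entries of a list of reals. -/
noncomputable def signChanges : List ℝ → ℕ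
  | [] => 0
  | [_] => 0
  | a :: b :: l => (if a * b < 0 then 1 else 0) + signChanges (b :: l)

/-- `S⁻(x)`: the number of sign changes in the sequence obtained from `x`
by deleting its zero entries. -/
noncomputable def Sminus {n : ℕ} (x : Fin n → ℝ) : ℕ :=
  signChanges ((List.ofFn x).filter (· ≠ 0))

/-- `S⁺(x)`: the maximal number of sign changes obtainable after replacing
each zero entry of `x` by an arbitrary nonzero value. -/
noncomputable def Splus {n : ℕ} (x : Fin n → ℝ) : ℕ :=
  sSup {m : ℕ | ∃ y : Fin n → ℝ, (∀ i, y i ≠ 0) ∧ (∀ i, x i ≠ 0 → y i = x i) ∧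
    signChanges (List.ofFn y) = m}

/-- A matrix is strictly `k`-positive if all its minors of order at most `k`
(taken with strictly increasing row and column indices) are positive. -/
def IsStrictlyKPositive {m n : ℕ} (X : Matrix (Fin m) (Fin n) ℝ) (k : ℕ) : Prop :=
  ∀ p : ℕ, 1 ≤ p → p ≤ k → ∀ r : Fin p → Fin m, ∀ c : Fin p → Fin n,
    StrictMono r → StrictMono c → 0 < (X.submatrix r c).det

/-!
Let `u₁, …, uₙ` be orthonormal eigenvectors of `A`, the columns of an orthogonal matrix `U`. By
Cauchy–Binet the compound matrix `A⁽ᵖ⁾` is diagonalized by `U⁽ᵖ⁾`, with the products of `p`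
eigenvalues as eigenvalues, and it has positive entries for `p ≤ k`. The product `λ₁ ⋯ λₚ` has
maximal modulus, so by Perron's argument its eigenvector, which lists the maximal minors of
`(u₁ … uₚ)`, has entries of one strict sign; since two such vectors are not orthogonal, no other
product has the same modulus. Hence `|λ₁| > ⋯ > |λₖ| > |λₖ₊₁|`, and an eigenvector for `λⱼ` is a
multiple of `uⱼ`.

When the maximal minors of `(u₁ … uₚ)` share a strict sign, a nonzero combination of the columns
satisfies `S⁺ < p`, because `p + 1` weakly alternating entries contradict the vanishing of the
determinant with a repeated column. A nonzero vector `x` orthogonal to the columns satisfies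
`S⁻(x) ≥ p`: restricting `x` to its `S⁻(x) + 1` sign blocks gives a matrix whose product with as
many leading columns is singular if `S⁻(x) < p`, while Cauchy–Binet makes its determinant nonzero.
Taking `p = j` and `p = j - 1` gives `j - 1 ≤ S⁻(uⱼ) ≤ S⁺(uⱼ) < j`.
-/

section Compound

variable {R l m n : Type*} [CommRing R] [LinearOrder l] [LinearOrder m] [LinearOrder n] {p : ℕ}

/-- The `p`-th compound matrix, the matrix of all minors of order `p`. A choice of `p` rows or
columns is encoded as an order embedding of `Fin p`. -/
def compound (p : ℕ) (A : Matrix m n R) : Matrix (Fin p ↪o m) (Fin p ↪o n) R :=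
  of fun I J => (A.submatrix I J).det

@[simp]
theorem compound_apply (A : Matrix m n R) (I : Fin p ↪o m) (J : Fin p ↪o n) :
    compound p A I J = (A.submatrix I J).det := rfl

theorem compound_transpose (A : Matrix m n R) : compound p Aᵀ = (compound p A)ᵀ := by
  ext I J
  exact det_transpose (A.submatrix J I)

theorem toMatrix_exteriorPower_map [Fintype m] [Fintype n] (A : Matrix m n R) :
    LinearMap.toMatrix
        (((Pi.basisFun R n).exteriorPower p).reindex Set.powersetCard.ofFinEmbEquiv.symm)
        (((Pi.basisFun R m).exteriorPower p).reindex Set.powersetCard.ofFinEmbEquiv.symm)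
        (exteriorPower.map p A.toLin') = compound p A := by
  ext I J
  rw [LinearMap.toMatrix_apply, compound_apply, ← det_transpose]
  simp only [Module.Basis.coe_reindex, Module.Basis.repr_reindex, Module.Basis.coord_apply,
    exteriorPower.coe_basis, exteriorPower.basis_repr_apply, exteriorPower.ιMulti_family,
    exteriorPower.map_apply_ιMulti, exteriorPower.ιMultiDual_apply_ιMulti, Equiv.symm_symm,
    Equiv.symm_apply_apply, Function.comp_apply, Finsupp.mapDomain_equiv_apply, toLin'_apply,
    Pi.basisFun_apply, Pi.basisFun_repr, mulVec_single, MulOpposite.op_one, one_smul, col_apply]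
  rfl

-- The Cauchy–Binet formula, read off from the functoriality of exterior powers.
theorem compound_mul [Finite l] [Fintype m] [Finite n] (A : Matrix l m R) (B : Matrix m n R) :
    compound p (A * B) = compound p A * compound p B := by
  have := Fintype.ofFinite l
  have := Fintype.ofFinite n
  simp only [← toMatrix_exteriorPower_map, toLin'_mul, exteriorPower.map_comp]
  exact LinearMap.toMatrix_comp _ _ _ _ _

theorem compound_one [Finite n] : compound p (1 : Matrix n n R) = 1 := by
  have := Fintype.ofFinite n
  rw [← toMatrix_exteriorPower_map, toLin'_one, exteriorPower.map_id, LinearMap.toMatrix_id]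

theorem compound_diagonal [Finite n] (d : n → R) :
    compound p (diagonal d) = diagonal fun I : Fin p ↪o n => ∏ t, d (I t) := by
  ext I J
  calc compound p (diagonal d) I J
      = (of fun s t => d (I s) * (1 : Matrix n n R).submatrix I J s t).det := by
        refine congrArg det (ext fun s t => ?_)
        simp [diagonal_apply, one_apply]
    _ = (∏ t, d (I t)) * compound p 1 I J := det_mul_column _ _
    _ = diagonal (fun I : Fin p ↪o n => ∏ t, d (I t)) I J := by
        rw [compound_one, one_apply, diagonal_apply, mul_ite, mul_one, mul_zero]

end Compound

/-- `A = U * diagonal d * Uᵀ` with `U` orthogonal: the columns of `U` are orthonormal eigenvectors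
of `A`, the `s`-th one belonging to the eigenvalue `d s`. -/
structure IsOrthogonalDiagonalization {ι R : Type*} [Fintype ι] [DecidableEq ι] [CommRing R]
    (A U : Matrix ι ι R) (d : ι → R) : Prop where
  transpose_mul_self : Uᵀ * U = 1
  mul_eq : A * U = U * diagonal d

namespace IsOrthogonalDiagonalization

section CommRing

variable {ι R : Type*} [Fintype ι] [CommRing R] {A U : Matrix ι ι R} {d : ι → R}

section DecidableEq

variable [DecidableEq ι] (h : IsOrthogonalDiagonalization A U d)

include h

theorem mulVec_transpose_mulVec (x : ι → R) : U *ᵥ (Uᵀ *ᵥ x) = x := by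
  rw [mulVec_mulVec, mul_eq_one_comm.mp h.transpose_mul_self, one_mulVec]

theorem transpose_mulVec_mulVec (y : ι → R) : Uᵀ *ᵥ (U *ᵥ y) = y := by
  rw [mulVec_mulVec, h.transpose_mul_self, one_mulVec]

theorem mulVec_mulVec_eq (y : ι → R) : A *ᵥ (U *ᵥ y) = U *ᵥ (d * y) := by
  rw [mulVec_mulVec, h.mul_eq, ← mulVec_mulVec]
  exact congrArg _ (funext fun s => mulVec_diagonal d y s)

theorem mulVec_dotProduct_mulVec (y z : ι → R) : (U *ᵥ y) ⬝ᵥ (U *ᵥ z) = y ⬝ᵥ z := by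
  rw [dotProduct_mulVec, ← mulVec_transpose, h.transpose_mulVec_mulVec]

theorem mulVec_col (s : ι) : A *ᵥ U.col s = d s • U.col s := by
  funext i
  exact (congrFun (congrFun h.mul_eq i) s).trans ((mul_diagonal d U i s).trans (mul_comm _ _))

theorem col_dotProduct_col (s t : ι) : U.col s ⬝ᵥ U.col t = (1 : Matrix ι ι R) s t := by
  rw [← h.transpose_mul_self]
  rfl

theorem transpose_mulVec_apply_eq_zero [NoZeroDivisors R] {x : ι → R} {μ : R}
    (hx : A *ᵥ x = μ • x) {s : ι} (hs : d s ≠ μ) : (Uᵀ *ᵥ x) s = 0 := by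
  have hdiag : d * (Uᵀ *ᵥ x) = μ • (Uᵀ *ᵥ x) := by
    rw [← mulVec_smul, ← hx, ← h.transpose_mulVec_mulVec (d * _), ← h.mulVec_mulVec_eq,
      h.mulVec_transpose_mulVec]
  have hmul : (d s - μ) * (Uᵀ *ᵥ x) s = 0 := by
    rw [sub_mul, sub_eq_zero]
    exact congrFun hdiag s
  exact (mul_eq_zero.mp hmul).resolve_left (sub_ne_zero.mpr hs)

end DecidableEq

theorem compound [LinearOrder ι] (h : IsOrthogonalDiagonalization A U d) (p : ℕ) :
    IsOrthogonalDiagonalization (compound p A) (compound p U)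
      fun I : Fin p ↪o ι => ∏ t, d (I t) where
  transpose_mul_self := by
    rw [← compound_transpose, ← compound_mul, h.transpose_mul_self, compound_one]
  mul_eq := by rw [← compound_mul, h.mul_eq, compound_mul, compound_diagonal]

end CommRing

end IsOrthogonalDiagonalization

theorem exists_perm_of_map_univ_eq {ι α : Type*} [Fintype ι] {f g : ι → α}
    (h : Finset.univ.val.map f = Finset.univ.val.map g) : ∃ σ : Equiv.Perm ι, f = g ∘ σ := by
  classical
  have hcard (a : α) : Fintype.card {i // f i = a} = Fintype.card {i // g i = a} := by
    simpa [Multiset.count_map, Fintype.card_subtype, eq_comm, Finset.card_def] using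
      congrArg (Multiset.count a) h
  exact ⟨Equiv.ofFiberEquiv fun a => Fintype.equivOfCardEq (hcard a),
    funext fun i => (Equiv.ofFiberEquiv_map _ i).symm⟩

theorem exists_isOrthogonalDiagonalization {ι : Type*} [Fintype ι] [DecidableEq ι]
    {A : Matrix ι ι ℝ} (hA : A.IsSymm) {d : ι → ℝ} (hd : A.charpoly = ∏ i, (X - C (d i))) :
    ∃ U, IsOrthogonalDiagonalization A U d := by
  have hH : A.IsHermitian := by rwa [IsHermitian, conjTranspose_eq_transpose_of_trivial]
  have hroots : A.charpoly.roots = Finset.univ.val.map d := by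
    rw [hd]
    simpa using roots_multiset_prod_X_sub_C (Finset.univ.val.map d)
  obtain ⟨σ, hσ⟩ : ∃ σ : Equiv.Perm ι, d = hH.eigenvalues ∘ σ :=
    exists_perm_of_map_univ_eq (hroots.symm.trans hH.roots_charpoly_eq_eigenvalues)
  have horth (i j : ι) : (hH.eigenvectorBasis i).ofLp ⬝ᵥ (hH.eigenvectorBasis j).ofLp =
      (1 : Matrix ι ι ℝ) i j := by
    rw [one_apply, ← hH.eigenvectorBasis.inner_eq_ite i j, EuclideanSpace.inner_eq_star_dotProduct,
      star_trivial, dotProduct_comm]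
  refine ⟨of fun i s => hH.eigenvectorBasis (σ s) i, ?_, ?_⟩
  · ext s t
    exact (horth (σ s) (σ t)).trans (by simp [one_apply])
  · ext i s
    rw [mul_diagonal]
    exact (congrFun (hH.mulVec_eigenvectorBasis (σ s)) i).trans (by simp [hσ, mul_comm])

section Perron

variable {ι : Type*}

theorem forall_nonneg_or_forall_nonpos_of_sum_abs_le {s : Finset ι} {t : ι → ℝ}
    (h : ∑ i ∈ s, |t i| ≤ |∑ i ∈ s, t i|) : (∀ i ∈ s, 0 ≤ t i) ∨ ∀ i ∈ s, t i ≤ 0 := by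
  rcases abs_cases (∑ i ∈ s, t i) with ⟨habs, -⟩ | ⟨habs, -⟩
  · have heq := (Finset.sum_eq_sum_iff_of_le fun i _ => le_abs_self (t i)).mp
      (le_antisymm (Finset.sum_le_sum fun i _ => le_abs_self (t i)) (habs ▸ h))
    exact .inl fun i hi => abs_eq_self.mp (heq i hi).symm
  · rw [habs, ← Finset.sum_neg_distrib] at h
    have heq := (Finset.sum_eq_sum_iff_of_le fun i _ => neg_le_abs (t i)).mp
      (le_antisymm (Finset.sum_le_sum fun i _ => neg_le_abs (t i)) h)
    exact .inr fun i hi => abs_eq_neg_self.mp (heq i hi).symm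

variable [Fintype ι] {B : Matrix ι ι ℝ}

/-- The vector `w` has no zero entry and all its entries have the same sign. -/
def HasStrictSign (w : ι → ℝ) : Prop := ∃ ε : ℝ, ∀ i, 0 < ε * w i

theorem HasStrictSign.dotProduct_ne_zero [Nonempty ι] {v w : ι → ℝ} (hv : HasStrictSign v)
    (hw : HasStrictSign w) : v ⬝ᵥ w ≠ 0 := by
  obtain ⟨ε, hε⟩ := hv
  obtain ⟨δ, hδ⟩ := hw
  have hpos : 0 < ∑ i, ε * v i * (δ * w i) :=
    Finset.sum_pos (fun i _ => mul_pos (hε i) (hδ i)) Finset.univ_nonempty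
  have hsmul : ∑ i, ε * v i * (δ * w i) = ε * δ * (v ⬝ᵥ w) := by
    simp only [dotProduct, Finset.mul_sum, mul_mul_mul_comm]
  exact right_ne_zero_of_mul (hsmul ▸ hpos.ne')

-- Perron's argument: passing from `w` to `|w|` cannot decrease the modulus of the quadratic form,
-- so it must preserve it, and then no two entries of `w` can have opposite signs.
theorem mul_nonneg_of_mulVec_eq_smul (hB : ∀ i j, 0 < B i j) {w : ι → ℝ} {μ : ℝ}
    (heig : B *ᵥ w = μ • w) (hμ : ∀ x : ι → ℝ, |x ⬝ᵥ B *ᵥ x| ≤ |μ| * (x ⬝ᵥ x)) (i j : ι) :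
    0 ≤ w i * w j := by
  set t : ι × ι → ℝ := fun q => B q.1 q.2 * (w q.1 * w q.2) with ht
  have hsum : ∑ q, t q = w ⬝ᵥ B *ᵥ w := by
    simp [ht, Fintype.sum_prod_type, dotProduct, mulVec, Finset.mul_sum, mul_left_comm]
  have hsum_abs : ∑ q, |t q| = |w| ⬝ᵥ B *ᵥ |w| := by
    simp [ht, Fintype.sum_prod_type, dotProduct, mulVec, Finset.mul_sum, mul_left_comm, abs_mul,
      abs_of_pos (hB _ _)]
  have hle : ∑ q, |t q| ≤ |∑ q, t q| := calc
    ∑ q, |t q| ≤ |(|w| ⬝ᵥ B *ᵥ |w|)| := hsum_abs.trans_le (le_abs_self _)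
    _ ≤ |μ| * (|w| ⬝ᵥ |w|) := hμ |w|
    _ = |μ| * |w ⬝ᵥ w| := by
      rw [abs_of_nonneg (show 0 ≤ w ⬝ᵥ w from Finset.sum_nonneg fun i _ => mul_self_nonneg (w i))]
      simp [dotProduct]
    _ = |∑ q, t q| := by rw [hsum, heig, dotProduct_smul, smul_eq_mul, abs_mul]
  rcases forall_nonneg_or_forall_nonpos_of_sum_abs_le hle with hnonneg | hnonpos
  · exact nonneg_of_mul_nonneg_right (hnonneg (i, j) (Finset.mem_univ _)) (hB i j)
  · have hdiag : w i * w i ≤ 0 :=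
      nonpos_of_mul_nonpos_right (hnonpos (i, i) (Finset.mem_univ _)) (hB i i)
    rw [mul_self_eq_zero.mp (hdiag.antisymm (mul_self_nonneg _)), zero_mul]

theorem hasStrictSign_of_mulVec_eq_smul (hB : ∀ i j, 0 < B i j) {w : ι → ℝ} (hw : w ≠ 0) {μ : ℝ}
    (heig : B *ᵥ w = μ • w) (hμ : ∀ x : ι → ℝ, |x ⬝ᵥ B *ᵥ x| ≤ |μ| * (x ⬝ᵥ x)) :
    HasStrictSign w := by
  obtain ⟨i₀, hi₀⟩ : ∃ i, w i ≠ 0 := Function.ne_iff.mp hw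
  refine ⟨w i₀ * μ, fun i => ?_⟩
  have hrow : w i₀ * μ * w i = ∑ j, B i j * (w i₀ * w j) := by
    rw [mul_assoc, ← smul_eq_mul μ, ← Pi.smul_apply, ← heig, mulVec, dotProduct, Finset.mul_sum]
    simp only [mul_left_comm]
  rw [hrow]
  exact Finset.sum_pos'
    (fun j _ => mul_nonneg (hB i j).le (mul_nonneg_of_mulVec_eq_smul hB heig hμ i₀ j))
    ⟨i₀, Finset.mem_univ _, mul_pos (hB i i₀) (mul_self_pos.mpr hi₀)⟩

end Perron

namespace IsOrthogonalDiagonalization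

variable {ι : Type*} [Fintype ι] [DecidableEq ι] {A U : Matrix ι ι ℝ} {d : ι → ℝ}
  (h : IsOrthogonalDiagonalization A U d)

include h

theorem abs_dotProduct_mulVec_le {s : ι} (hs : ∀ t, |d t| ≤ |d s|) (x : ι → ℝ) :
    |x ⬝ᵥ A *ᵥ x| ≤ |d s| * (x ⬝ᵥ x) := by
  obtain ⟨y, rfl⟩ : ∃ y, U *ᵥ y = x := ⟨_, h.mulVec_transpose_mulVec x⟩
  rw [h.mulVec_mulVec_eq, h.mulVec_dotProduct_mulVec, h.mulVec_dotProduct_mulVec]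
  calc |y ⬝ᵥ (d * y)| ≤ ∑ t, |y t * (d t * y t)| := Finset.abs_sum_le_sum_abs _ _
    _ = ∑ t, |d t| * (y t * y t) :=
      Finset.sum_congr rfl fun t _ => by rw [mul_left_comm, abs_mul, abs_mul_self]
    _ ≤ ∑ t, |d s| * (y t * y t) :=
      Finset.sum_le_sum fun t _ => mul_le_mul_of_nonneg_right (hs t) (mul_self_nonneg _)
    _ = |d s| * (y ⬝ᵥ y) := (Finset.mul_sum _ _ _).symm

theorem col_ne_zero (s : ι) : U.col s ≠ 0 := fun h₀ => by
  simpa [h₀] using h.col_dotProduct_col s s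

theorem hasStrictSign_col (hA : ∀ i j, 0 < A i j) {s : ι} (hs : ∀ t, |d t| ≤ |d s|) :
    HasStrictSign (U.col s) :=
  hasStrictSign_of_mulVec_eq_smul hA (h.col_ne_zero s) (h.mulVec_col s)
    (h.abs_dotProduct_mulVec_le hs)

-- Two columns of constant sign cannot be orthogonal.
theorem eq_of_abs_eq_of_forall_abs_le (hA : ∀ i j, 0 < A i j) {s t : ι}
    (hs : ∀ r, |d r| ≤ |d s|) (hst : |d s| = |d t|) : s = t := by
  by_contra hne
  have : Nonempty ι := ⟨s⟩
  refine (h.hasStrictSign_col hA hs).dotProduct_ne_zero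
    (h.hasStrictSign_col hA fun r => (hs r).trans_eq hst) ?_
  rw [h.col_dotProduct_col, one_apply_ne hne]

end IsOrthogonalDiagonalization

/-- Karlin's strict sign consistency: the minors of maximal order `p` of the `p`-column matrix `V`
are nonzero and all have the same sign. -/
def IsStrictlySignConsistent {ι : Type*} [Preorder ι] {p : ℕ} (V : Matrix ι (Fin p) ℝ) : Prop :=
  HasStrictSign fun I : Fin p ↪o ι => (V.submatrix I id).det

theorem IsStrictlyKPositive.compound_pos {m n k p : ℕ} {A : Matrix (Fin m) (Fin n) ℝ}
    (hA : IsStrictlyKPositive A k) (hp : p ≤ k) (I : Fin p ↪o Fin m) (J : Fin p ↪o Fin n) :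
    0 < compound p A I J := by
  rcases p.eq_zero_or_pos with rfl | hp₀
  · simp
  · exact hA p hp₀ hp I J I.strictMono J.strictMono

theorem val_le_val_orderEmbedding {p n : ℕ} (I : Fin p ↪o Fin n) (t : Fin p) :
    (t : ℕ) ≤ I t := by
  simpa using Finset.card_le_card_of_injOn (s := Finset.Iio t) (t := Finset.Iio (I t)) I
    (fun a ha => by simpa using ha) I.injective.injOn

theorem strictMono_snoc {α : Type*} [Preorder α] {p : ℕ} {f : Fin p → α} (hf : StrictMono f)
    {a : α} (ha : ∀ t, f t < a) : StrictMono (Fin.snoc f a : Fin (p + 1) → α) := by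
  rw [← Fin.insertNth_last', Fin.strictMono_insertNth_iff]
  exact ⟨hf, fun t _ => ha t, fun t ht => absurd ht (Fin.castSucc_lt_last t).not_ge⟩

section Spectrum

variable {n k p : ℕ} {A U : Matrix (Fin n) (Fin n) ℝ} {lam : Fin n → ℝ}

theorem abs_prod_le_abs_prod_castLE (hlam : Antitone fun i => |lam i|) (hpn : p ≤ n)
    (I : Fin p ↪o Fin n) : |∏ t, lam (I t)| ≤ |∏ t, lam (Fin.castLE hpn t)| := by
  rw [Finset.abs_prod, Finset.abs_prod]
  exact Finset.prod_le_prod (fun _ _ => abs_nonneg _) fun t _ =>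
    hlam (val_le_val_orderEmbedding I t)

namespace IsOrthogonalDiagonalization

variable (h : IsOrthogonalDiagonalization A U lam) (hA : IsStrictlyKPositive A k)
  (hlam : Antitone fun i => |lam i|)

include h hA hlam

theorem isStrictlySignConsistent_leading (hp : p ≤ k) (hpn : p ≤ n) :
    IsStrictlySignConsistent (U.submatrix id (Fin.castLE hpn)) :=
  (h.compound p).hasStrictSign_col (hA.compound_pos hp) (s := Fin.castLEOrderEmb hpn)
    (abs_prod_le_abs_prod_castLE hlam hpn)

-- If `|lam i| = |lam i'|`, the leading `i + 1` indices and the same set with `i` replaced by `i'`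
-- both maximize the modulus of the eigenvalues of the positive matrix `compound (i + 1) A`.
theorem abs_lt_abs {i i' : Fin n} (hii' : i < i') (hi : (i : ℕ) < k) : |lam i'| < |lam i| := by
  refine (hlam hii'.le).lt_of_ne fun (heq : |lam i'| = |lam i|) => hii'.ne ?_
  have hlast : Fin.castLE i.isLt (Fin.last i) = i := rfl
  have hlt (t : Fin i) : Fin.castLE i.isLt.le t < i' := lt_trans (b := i) t.isLt hii'
  let S : Fin (i + 1) ↪o Fin n := Fin.castLEOrderEmb i.isLt
  let S' : Fin (i + 1) ↪o Fin n := .ofStrictMono _ (strictMono_snoc (Fin.strictMono_castLE _) hlt)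
  have hprod : |∏ t, lam (S t)| = |∏ t, lam (S' t)| := by
    simp [S, S', Fin.prod_univ_castSucc, abs_mul, heq, hlast]
  have hS : S = S' := (h.compound (i + 1)).eq_of_abs_eq_of_forall_abs_le (hA.compound_pos hi)
    (abs_prod_le_abs_prod_castLE hlam i.isLt) hprod
  simpa [S, S', hlast] using DFunLike.congr_fun hS (Fin.last i)

end IsOrthogonalDiagonalization

end Spectrum

section SignChanges

theorem signChanges_le_cons (a : ℝ) (l : List ℝ) : signChanges l ≤ signChanges (a :: l) := by
  cases l <;> simp [signChanges]

theorem signChanges_cons_le_cons_cons (a : ℝ) {b : ℝ} (hb : b ≠ 0) (l : List ℝ) :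
    signChanges (a :: l) ≤ signChanges (a :: b :: l) := by
  cases l with
  | nil => simp [signChanges]
  | cons d l =>
    have hchange (had : a * d < 0) : a * b < 0 ∨ b * d < 0 := by
      by_contra! h
      have := mul_nonneg h.1 h.2
      nlinarith [mul_self_pos.mpr hb]
    simp only [signChanges]
    split_ifs <;> grind

theorem signChanges_cons_le_cons_of_sublist {l l' : List ℝ} (h : l.Sublist l')
    (hl' : ∀ b ∈ l', b ≠ 0) (a : ℝ) : signChanges (a :: l) ≤ signChanges (a :: l') := by
  induction h generalizing a with
  | slnil => exact le_rfl
  | cons b _ ih =>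
    exact (ih (fun c hc => hl' c (.tail _ hc)) a).trans
      (signChanges_cons_le_cons_cons a (hl' b List.mem_cons_self) _)
  | cons_cons b _ ih => exact Nat.add_le_add_left (ih (fun c hc => hl' c (.tail _ hc)) b) _

theorem signChanges_le_of_sublist {l l' : List ℝ} (h : l.Sublist l') (hl' : ∀ b ∈ l', b ≠ 0) :
    signChanges l ≤ signChanges l' := by
  induction h with
  | slnil => exact le_rfl
  | cons b _ ih =>
    exact (ih fun c hc => hl' c (.tail _ hc)).trans (signChanges_le_cons b _)
  | cons_cons b h _ =>
    exact signChanges_cons_le_cons_of_sublist h (fun c hc => hl' c (.tail _ hc)) b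

theorem signChanges_le_length (l : List ℝ) : signChanges l ≤ l.length := by
  induction l using signChanges.induct <;> simp only [signChanges, List.length_cons] at * <;> grind

variable {n : ℕ}

theorem bddAbove_signChanges_completions (x : Fin n → ℝ) :
    BddAbove {m : ℕ | ∃ y : Fin n → ℝ, (∀ i, y i ≠ 0) ∧ (∀ i, x i ≠ 0 → y i = x i) ∧
      signChanges (List.ofFn y) = m} := by
  refine ⟨n, ?_⟩
  rintro _ ⟨y, -, -, rfl⟩
  simpa using signChanges_le_length (List.ofFn y)

theorem exists_completion_signChanges_eq_Splus (x : Fin n → ℝ) :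
    ∃ y : Fin n → ℝ, (∀ i, y i ≠ 0) ∧ (∀ i, x i ≠ 0 → y i = x i) ∧
      signChanges (List.ofFn y) = Splus x := by
  refine Nat.sSup_mem ?_ (bddAbove_signChanges_completions x)
  exact ⟨_, fun i => if x i = 0 then 1 else x i, by grind, by grind, rfl⟩

theorem filter_ofFn_sublist_of_completion {x y : Fin n → ℝ} (hyx : ∀ i, x i ≠ 0 → y i = x i) :
    ((List.ofFn x).filter (· ≠ 0)).Sublist (List.ofFn y) := by
  rw [List.ofFn_eq_map, List.ofFn_eq_map, List.filter_map,
    List.map_congr_left fun i hi => (hyx i (by simpa using hi)).symm]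
  exact List.filter_sublist.map y

theorem Sminus_le_Splus (x : Fin n → ℝ) : Sminus x ≤ Splus x := by
  obtain ⟨y, hy, hyx, hmax⟩ := exists_completion_signChanges_eq_Splus x
  exact (signChanges_le_of_sublist (filter_ofFn_sublist_of_completion hyx)
    (List.forall_mem_ofFn_iff.mpr hy)).trans_eq hmax

theorem Sminus_eq_signChanges_ofFn {x : Fin n → ℝ} (hx : ∀ i, x i ≠ 0) :
    Sminus x = signChanges (List.ofFn x) := by
  rw [Sminus, List.filter_eq_self.mpr (by simpa [List.mem_ofFn] using hx)]

end SignChanges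

section SignBlocks

/-- The map `β` cuts the indices of `x` into consecutive blocks on which `x` is nonzero and weakly
has the sign of `c`, `-c`, `c`, `-c`, …. -/
structure IsSignBlockPartition {n p : ℕ} (x : Fin n → ℝ) (c : ℝ) (β : Fin n → Fin p) : Prop where
  ne_zero : c ≠ 0
  monotone : Monotone β
  nonneg : ∀ i, 0 ≤ c * (-1) ^ (β i : ℕ) * x i
  exists_ne_zero : ∀ b, ∃ i, β i = b ∧ x i ≠ 0

-- Reading one more entry `a` after the nonzero entry `c`: the last nonzero entry becomes `c'`, and
-- `e` sign changes have been encountered.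
theorem exists_signChanges_cons_filter_cons {c : ℝ} (hc : c ≠ 0) (a : ℝ) (l : List ℝ) :
    ∃ (c' : ℝ) (e : ℕ), 0 < c * (-1) ^ e * c' ∧ 0 ≤ c * (-1) ^ e * a ∧ (e ≠ 0 → e = 1 ∧ a ≠ 0) ∧
      signChanges (c :: (a :: l).filter (· ≠ 0)) = e + signChanges (c' :: l.filter (· ≠ 0)) := by
  have hcc : 0 < c * c := mul_self_pos.mpr hc
  rcases eq_or_ne a 0 with rfl | ha
  · exact ⟨c, 0, by simpa using hcc, by simp, by simp, by simp⟩
  rcases (mul_ne_zero hc ha).lt_or_gt with hca | hca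
  · exact ⟨a, 1, by simpa using hca, by simpa using hca.le, by simp [ha],
      by simp [ha, signChanges, hca]⟩
  · exact ⟨a, 0, by simpa using hca, by simpa using hca.le, by simp,
      by simp [ha, signChanges, hca.not_gt]⟩

theorem monotone_cons {α : Type*} [Preorder α] {n : ℕ} {a : α} {f : Fin n → α}
    (ha : ∀ i, a ≤ f i) (hf : Monotone f) : Monotone (Fin.cons a f : Fin (n + 1) → α) := by
  intro i j hij
  cases i using Fin.cases with
  | zero => cases j using Fin.cases <;> simp [ha]
  | succ i =>
    cases j using Fin.cases with
    | zero => exact absurd hij (Fin.succ_pos i).not_ge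
    | succ j => simpa using hf (Fin.succ_le_succ_iff.mp hij)

theorem exists_signBlocks_cons {c : ℝ} (hc : c ≠ 0) {n : ℕ} (x : Fin n → ℝ) :
    ∃ β : Fin n → ℕ, Monotone β ∧ (∀ i, 0 ≤ c * (-1) ^ β i * x i) ∧
      (∀ i, β i ≤ signChanges (c :: (List.ofFn x).filter (· ≠ 0))) ∧
      ∀ b ≠ 0, b ≤ signChanges (c :: (List.ofFn x).filter (· ≠ 0)) → ∃ i, β i = b ∧ x i ≠ 0 := by
  induction n generalizing c with
  | zero => exact ⟨Fin.elim0, fun i => i.elim0, fun i => i.elim0, fun i => i.elim0,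
      fun b hb hb' => absurd hb' (by simpa [signChanges] using hb)⟩
  | succ n ih =>
    obtain ⟨c', e, hc', hx₀, he, hchanges⟩ :=
      exists_signChanges_cons_filter_cons hc (x 0) (List.ofFn (Fin.tail x))
    have hc'₀ : c' ≠ 0 := right_ne_zero_of_mul hc'.ne'
    obtain ⟨β, hmono, hnonneg, hle, hattained⟩ := ih hc'₀ (Fin.tail x)
    rw [← List.ofFn_cons, Fin.cons_self_tail] at hchanges
    rw [hchanges]
    refine ⟨Fin.cons e fun i => e + β i, ?_, ?_, ?_, ?_⟩
    · exact monotone_cons (fun i => Nat.le_add_right _ _) fun i j hij =>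
        Nat.add_le_add_left (hmono hij) e
    · refine Fin.forall_fin_succ.mpr ⟨hx₀, fun i => ?_⟩
      have hmul := mul_nonneg hc'.le (hnonneg i)
      refine nonneg_of_mul_nonneg_right (hmul.trans_eq ?_) (mul_self_pos.mpr hc'₀)
      simp only [Fin.cons_succ, Fin.tail, pow_add]
      ring
    · exact Fin.forall_fin_succ.mpr ⟨Nat.le_add_right _ _, fun i => Nat.add_le_add_left (hle i) e⟩
    · intro b hb hbe
      rcases eq_or_ne b e with rfl | hne
      · exact ⟨0, rfl, (he hb).2⟩
      · have he₁ : e ≤ 1 := by grind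
        obtain ⟨i, hi, hxi⟩ := hattained (b - e) (by omega) (by omega)
        exact ⟨i.succ, (congrArg (e + ·) hi).trans (by omega), hxi⟩

theorem exists_isSignBlockPartition {n : ℕ} {x : Fin n → ℝ} (hx : x ≠ 0) :
    ∃ (c : ℝ) (β : Fin n → Fin (Sminus x + 1)), IsSignBlockPartition x c β := by
  induction n with
  | zero => exact absurd (Subsingleton.elim x 0) hx
  | succ n ih =>
    rcases eq_or_ne (x 0) 0 with hx₀ | hx₀
    · have htail : Fin.tail x ≠ 0 := fun h =>
        hx (funext (Fin.forall_fin_succ.mpr ⟨hx₀, fun i => congrFun h i⟩))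
      have hSminus : Sminus x = Sminus (Fin.tail x) := by
        rw [Sminus, List.ofFn_succ, List.filter_cons_of_neg (by simpa using hx₀)]
        rfl
      obtain ⟨c, β, hc, hmono, hnonneg, hexists⟩ := ih htail
      rw [hSminus]
      exact ⟨c, Fin.cons 0 β, hc, monotone_cons (fun i => Fin.zero_le _) hmono,
        Fin.forall_fin_succ.mpr ⟨by simp [hx₀], hnonneg⟩,
        fun b => let ⟨i, hi⟩ := hexists b; ⟨i.succ, hi⟩⟩
    · have hSminus : Sminus x = signChanges (x 0 :: (List.ofFn (Fin.tail x)).filter (· ≠ 0)) := by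
        rw [Sminus, List.ofFn_succ, List.filter_cons_of_pos (by simpa using hx₀)]
        rfl
      obtain ⟨β, hmono, hnonneg, hle, hattained⟩ := exists_signBlocks_cons hx₀ (Fin.tail x)
      rw [← hSminus] at hle hattained
      refine ⟨x 0, Fin.cons 0 fun i => ⟨β i, Nat.lt_succ_of_le (hle i)⟩, hx₀,
        monotone_cons (fun i => Fin.zero_le _) fun i j hij => hmono hij,
        Fin.forall_fin_succ.mpr ⟨by simpa using mul_self_nonneg (x 0), hnonneg⟩, fun b => ?_⟩
      rcases eq_or_ne b 0 with rfl | hb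
      · exact ⟨0, rfl, hx₀⟩
      · obtain ⟨i, hi, hxi⟩ := hattained b (Fin.val_ne_zero_iff.mpr hb) (Nat.le_of_lt_succ b.isLt)
        exact ⟨i.succ, Fin.ext hi, hxi⟩

theorem IsSignBlockPartition.exists_orderEmbedding {n p : ℕ} {x : Fin n → ℝ} {c : ℝ}
    {β : Fin n → Fin p} (h : IsSignBlockPartition x c β) :
    ∃ I : Fin p ↪o Fin n, ∀ b, β (I b) = b ∧ x (I b) ≠ 0 := by
  choose f hβ hx using h.exists_ne_zero
  refine ⟨.ofStrictMono f fun b b' hb => h.monotone.reflect_lt ?_, fun b => ⟨hβ b, hx b⟩⟩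
  rwa [hβ, hβ]

theorem exists_alternating_orderEmbedding {n : ℕ} {x : Fin n → ℝ} (hx : x ≠ 0) :
    ∃ (c : ℝ) (I : Fin (Splus x + 1) ↪o Fin n), c ≠ 0 ∧
      ∀ s : Fin _, 0 ≤ c * (-1) ^ (s : ℕ) * x (I s) := by
  obtain ⟨y, hy, hyx, hmax⟩ := exists_completion_signChanges_eq_Splus x
  have hSminus : Sminus y = Splus x := (Sminus_eq_signChanges_ofFn hy).trans hmax
  obtain ⟨i₀, -⟩ : ∃ i, x i ≠ 0 := Function.ne_iff.mp hx
  obtain ⟨c, β, h⟩ := exists_isSignBlockPartition (Function.ne_iff.mpr ⟨i₀, hy i₀⟩)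
  obtain ⟨I, hI⟩ := h.exists_orderEmbedding
  rw [← hSminus]
  refine ⟨c, I, h.ne_zero, fun s => ?_⟩
  rcases eq_or_ne (x (I s)) 0 with hxs | hxs
  · rw [hxs, mul_zero]
  · simpa only [(hI s).1, hyx _ hxs] using h.nonneg (I s)

end SignBlocks

section VariationDiminishing

theorem det_mul_eq_sum {R ι : Type*} [CommRing R] [LinearOrder ι] [Fintype ι] {p : ℕ}
    (A : Matrix (Fin p) ι R) (B : Matrix ι (Fin p) R) :
    (A * B).det = ∑ I : Fin p ↪o ι, (A.submatrix id I).det * (B.submatrix I id).det :=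
  congrFun (congrFun (compound_mul A B) (RelEmbedding.refl _)) (RelEmbedding.refl _)

-- Either `β` is the identity and the matrix is diagonal, or `β` omits a value and there is a zero
-- row.
theorem det_ite_eq_nonneg {p : ℕ} {β : Fin p → Fin p} (hβ : Monotone β) {a : Fin p → ℝ}
    (ha : ∀ t, 0 ≤ a t) : 0 ≤ (of fun b t => if β t = b then a t else 0).det := by
  by_cases hsurj : Function.Surjective β
  · have hid : β = id :=
      (hβ.strictMono_of_injective (Finite.injective_iff_surjective.mpr hsurj)).eq_id
    have hdiag : (of fun b t => if β t = b then a t else 0) = diagonal a := by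
      ext b t
      rcases eq_or_ne b t with rfl | hbt
      · simp [hid]
      · simp [hid, hbt, hbt.symm]
    rw [hdiag, det_diagonal]
    exact Finset.prod_nonneg fun t _ => ha t
  · obtain ⟨b, hb⟩ := not_forall.mp hsurj
    exact (det_eq_zero_of_row_eq_zero b fun t => if_neg fun h => hb ⟨t, h⟩).ge

namespace IsSignBlockPartition

variable {n p : ℕ} {x : Fin n → ℝ} {c : ℝ} {β : Fin n → Fin p}

/-- The matrix whose `b`-th row is `(-1) ^ b * c * x` restricted to the `b`-th block. -/
def blockMatrix (x : Fin n → ℝ) (c : ℝ) (β : Fin n → Fin p) : Matrix (Fin p) (Fin n) ℝ :=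
  of fun b i => if β i = b then c * (-1) ^ (β i : ℕ) * x i else 0

theorem vecMul_blockMatrix (x : Fin n → ℝ) (c : ℝ) (β : Fin n → Fin p) :
    (fun b : Fin p => (-1) ^ (b : ℕ)) ᵥ* blockMatrix x c β = c • x := by
  ext i
  simp only [vecMul, dotProduct, blockMatrix, of_apply, mul_ite, mul_zero, Finset.sum_ite_eq,
    Finset.mem_univ, if_true, Pi.smul_apply, smul_eq_mul]
  rw [← mul_assoc, mul_left_comm, ← mul_pow, neg_one_mul, neg_neg, one_pow, mul_one]

variable (h : IsSignBlockPartition x c β)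

include h

theorem det_blockMatrix_submatrix_nonneg (I : Fin p ↪o Fin n) :
    0 ≤ ((blockMatrix x c β).submatrix id I).det :=
  det_ite_eq_nonneg (h.monotone.comp I.monotone) fun t => h.nonneg (I t)

theorem exists_det_blockMatrix_submatrix_pos :
    ∃ I : Fin p ↪o Fin n, 0 < ((blockMatrix x c β).submatrix id I).det := by
  obtain ⟨I, hI⟩ := h.exists_orderEmbedding
  refine ⟨I, (h.det_blockMatrix_submatrix_nonneg I).lt_of_ne' ?_⟩
  have hdiag : (blockMatrix x c β).submatrix id I =
      diagonal fun t : Fin p => c * (-1) ^ (t : ℕ) * x (I t) := by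
    ext b t
    rcases eq_or_ne b t with rfl | hbt
    · simp [blockMatrix, (hI b).1]
    · simp [blockMatrix, (hI t).1, hbt, hbt.symm]
  rw [hdiag, det_diagonal]
  exact Finset.prod_ne_zero_iff.mpr fun t _ =>
    mul_ne_zero (mul_ne_zero h.ne_zero (pow_ne_zero _ (by norm_num))) (hI t).2

theorem vecMul_ne_zero [NeZero p] {V : Matrix (Fin n) (Fin p) ℝ} (hV : IsStrictlySignConsistent V) :
    x ᵥ* V ≠ 0 := by
  intro hx
  obtain ⟨ε, hε⟩ := hV
  obtain ⟨I₀, hI₀⟩ := h.exists_det_blockMatrix_submatrix_pos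
  have hpos : 0 < ∑ I : Fin p ↪o Fin n,
      ((blockMatrix x c β).submatrix id I).det * (ε * (V.submatrix I id).det) :=
    Finset.sum_pos' (fun I _ => mul_nonneg (h.det_blockMatrix_submatrix_nonneg I) (hε I).le)
      ⟨I₀, Finset.mem_univ _, mul_pos hI₀ (hε I₀)⟩
  have hdet : (blockMatrix x c β * V).det = 0 :=
    exists_vecMul_eq_zero_iff.mp ⟨fun b : Fin p => (-1) ^ (b : ℕ),
      Function.ne_iff.mpr ⟨0, by simp⟩, by
        rw [← vecMul_vecMul, vecMul_blockMatrix, smul_vecMul, hx, smul_zero]⟩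
  simp only [mul_left_comm _ ε, ← Finset.mul_sum, ← det_mul_eq_sum, hdet, mul_zero] at hpos
  exact hpos.false

end IsSignBlockPartition

-- The cofactor vector of a `(p + 1) × p` matrix annihilates it, by Laplace expansion of the
-- determinant with a repeated column.
theorem vecMul_cofactor {R : Type*} [CommRing R] {p : ℕ} (W : Matrix (Fin (p + 1)) (Fin p) R) :
    (fun s : Fin (p + 1) => (-1) ^ (s : ℕ) * (W.submatrix s.succAbove id).det) ᵥ* W = 0 := by
  ext j
  have hdet : (of fun s => (Fin.cons (W s j) (W s) : Fin (p + 1) → R)).det = 0 :=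
    det_zero_of_column_eq (Fin.succ_ne_zero j).symm fun s => rfl
  rw [det_succ_column_zero] at hdet
  exact (Finset.sum_congr rfl fun s _ => mul_right_comm _ _ _).trans hdet

namespace IsStrictlySignConsistent

variable {ι : Type*} [Preorder ι] {p : ℕ} {V : Matrix ι (Fin p) ℝ}

theorem mulVec_eq_zero_of_alternating (hV : IsStrictlySignConsistent V) {a : Fin p → ℝ} {c : ℝ}
    (hc : c ≠ 0) (I : Fin (p + 1) ↪o ι)
    (halt : ∀ s : Fin _, 0 ≤ c * (-1) ^ (s : ℕ) * (V *ᵥ a) (I s)) : V *ᵥ a = 0 := by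
  obtain ⟨ε, hε⟩ := hV
  have hcof (s : Fin (p + 1)) : 0 < ε * (V.submatrix (I ∘ s.succAbove) id).det :=
    hε (s.succAboveOrderEmb.trans I)
  have hsum : ∑ s : Fin (p + 1), ε * (V.submatrix (I ∘ s.succAbove) id).det *
      (c * (-1) ^ (s : ℕ) * (V *ᵥ a) (I s)) = 0 := by
    have hcofactor := congrArg (· ⬝ᵥ a) (vecMul_cofactor (V.submatrix I id))
    rw [← dotProduct_mulVec, zero_dotProduct] at hcofactor
    rw [← mul_zero (ε * c), ← hcofactor, dotProduct, Finset.mul_sum]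
    refine Finset.sum_congr rfl fun s _ => ?_
    change _ = ε * c * ((-1) ^ (s : ℕ) * (V.submatrix (I ∘ s.succAbove) id).det * (V *ᵥ a) (I s))
    ring
  have hzero (s : Fin (p + 1)) : (V *ᵥ a) (I s) = 0 := by
    have := (Finset.sum_eq_zero_iff_of_nonneg fun s _ =>
      mul_nonneg (hcof s).le (halt s)).mp hsum s (Finset.mem_univ _)
    simpa [(hcof s).ne', hc] using this
  have ha : a = 0 := by
    by_contra ha
    refine right_ne_zero_of_mul (hcof 0).ne' (exists_mulVec_eq_zero_iff.mp ⟨a, ha, ?_⟩)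
    exact funext fun t => hzero (Fin.succAbove 0 t)
  rw [ha, mulVec_zero]

theorem Splus_mulVec_lt {n : ℕ} {V : Matrix (Fin n) (Fin p) ℝ} (hV : IsStrictlySignConsistent V)
    {a : Fin p → ℝ} (ha : V *ᵥ a ≠ 0) : Splus (V *ᵥ a) < p := by
  obtain ⟨c, I, hc, halt⟩ := exists_alternating_orderEmbedding ha
  by_contra! hp
  have hle : p + 1 ≤ Splus (V *ᵥ a) + 1 := Nat.succ_le_succ hp
  exact ha (hV.mulVec_eq_zero_of_alternating hc ((Fin.castLEOrderEmb hle).trans I)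
    fun s => halt (Fin.castLE hle s))

end IsStrictlySignConsistent

end VariationDiminishing

section Eigenspans

variable {n k p : ℕ} {A U : Matrix (Fin n) (Fin n) ℝ} {lam x : Fin n → ℝ}

theorem submatrix_castLE_mulVec {m R : Type*} [NonUnitalNonAssocSemiring R]
    {U : Matrix m (Fin n) R} {y : Fin n → R} (hpn : p ≤ n) (hy : ∀ s : Fin n, p ≤ s → y s = 0) :
    U.submatrix id (Fin.castLE hpn) *ᵥ (y ∘ Fin.castLE hpn) = U *ᵥ y := by
  ext i
  simp only [mulVec, dotProduct]
  refine Finset.sum_of_injOn (Fin.castLE hpn) (Fin.castLE_injective hpn).injOn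
    (fun _ _ => Finset.mem_coe.mpr (Finset.mem_univ _)) (fun s _ hs => ?_) fun _ _ => rfl
  have hps : p ≤ s := not_lt.mp fun hlt =>
    hs ⟨⟨s, hlt⟩, Finset.mem_coe.mpr (Finset.mem_univ _), rfl⟩
  rw [hy s hps, mul_zero]

namespace IsOrthogonalDiagonalization

variable (h : IsOrthogonalDiagonalization A U lam) (hA : IsStrictlyKPositive A k)
  (hlam : Antitone fun i => |lam i|) (hx : x ≠ 0) (hp : p ≤ k) (hpn : p ≤ n)

include h hA hlam hx hp hpn

theorem le_Sminus (horth : ∀ s : Fin n, s < p → (Uᵀ *ᵥ x) s = 0) : p ≤ Sminus x := by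
  by_contra! hlt
  have hleading := h.isStrictlySignConsistent_leading hA hlam (p := Sminus x + 1)
    (hlt.trans_le hp) (hlt.trans_le hpn)
  obtain ⟨c, β, hβ⟩ := exists_isSignBlockPartition hx
  refine hβ.vecMul_ne_zero hleading (funext fun t => ?_)
  rw [← mulVec_transpose]
  exact horth (Fin.castLE _ t) (t.isLt.trans_le hlt)

theorem Splus_lt (hspan : ∀ s : Fin n, p ≤ s → (Uᵀ *ᵥ x) s = 0) : Splus x < p := by
  have hcomb := (submatrix_castLE_mulVec hpn hspan).trans (h.mulVec_transpose_mulVec x)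
  rw [← hcomb] at hx ⊢
  exact (h.isStrictlySignConsistent_leading hA hlam hp hpn).Splus_mulVec_lt hx

end IsOrthogonalDiagonalization

end Eigenspans

/-- For a symmetric strictly `k`-positive matrix with eigenvalues ordered by
decreasing modulus, any eigenvector `u` belonging to the `j`-th eigenvalue
(with `j < k`, zero-based, i.e. the `(j+1)`-st eigenvalue) has exactly `j`
sign changes: `S⁻(u) = S⁺(u) = j`. -/
theorem symm_strictly_kpositive_eigenvector_sign_changes
    {n k : ℕ} (hk1 : 1 ≤ k) (hkn : k ≤ n)
    (A : Matrix (Fin n) (Fin n) ℝ) (hsymm : A.IsSymm)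
    (hA : IsStrictlyKPositive A k)
    (lam : Fin n → ℝ)
    (hspec : A.charpoly = ∏ i, (X - C (lam i)))
    (hord : ∀ i j : Fin n, i ≤ j → |lam j| ≤ |lam i|)
    (j : Fin n) (hj : (j : ℕ) < k)
    (u : Fin n → ℝ) (hu : u ≠ 0) (heig : A.mulVec u = lam j • u) :
    Sminus u = (j : ℕ) ∧ Splus u = (j : ℕ) := by
  have hlam : Antitone fun i => |lam i| := fun i i' => hord i i'
  obtain ⟨U, hU⟩ := exists_isOrthogonalDiagonalization hsymm hspec
  have hcoord (s : Fin n) (hs : s ≠ j) : (Uᵀ *ᵥ u) s = 0 := by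
    refine hU.transpose_mulVec_apply_eq_zero heig fun heq => ?_
    rcases hs.lt_or_gt with hlt | hlt
    · exact (hU.abs_lt_abs hA hlam hlt ((Fin.lt_def.mp hlt).trans hj)).ne' (congrArg abs heq)
    · exact (hU.abs_lt_abs hA hlam hlt hj).ne (congrArg abs heq)
  have hlower : j ≤ Sminus u :=
    hU.le_Sminus hA hlam hu hj.le j.isLt.le fun s hs => hcoord s (Fin.ne_of_lt hs)
  have hupper : Splus u < j + 1 :=
    hU.Splus_lt hA hlam hu hj j.isLt fun s hs => hcoord s (Fin.ne_of_gt hs)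
  have hle := Sminus_le_Splus u
  omega
end

section
/- Let g : {1,2,…} → ℝ be a sequence whose Hankel matrix H(g) has finite rank r ≥ 1. Then H(g) is totally positive (every minor of every finite submatrix of H(g) is nonnegative) if and only if there exist coefficients c₁, …, c_r > 0 and values λ₁ > λ₂ > … > λ_r ≥ 0 such that g(t) = Σ_{i=1}^{r} c_i λ_i^{t−1} for all t ≥ 1. -/
open Matrix

/-- The square submatrix of the infinite Hankel matrix `H(g)_{i,j} = g(i+j-1)`
(`i,j ≥ 1`) obtained from rows `ρ` and columns `c`.  Here the sequence is
indexed from `0`, i.e. `g t` stands for the value of the impulse response at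
time `t + 1`, so that `H(g)` has `(i,j)`-entry `g (i + j)` for `i, j ≥ 0`. -/
def hankelSub (g : ℕ → ℝ) {p : ℕ} (ρ c : Fin p → ℕ) : Matrix (Fin p) (Fin p) ℝ :=
  Matrix.of fun i j => g (ρ i + c j)

/-- The infinite Hankel matrix `H(g)` is totally positive: every minor of every
finite submatrix is nonnegative. -/
def HankelTotallyPositive (g : ℕ → ℝ) : Prop :=
  ∀ (p : ℕ) (ρ c : Fin p → ℕ), StrictMono ρ → StrictMono c →
    0 ≤ (hankelSub g ρ c).det

/-- The infinite Hankel matrix `H(g)` has rank exactly `r`: all of its finite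
submatrices have rank at most `r` and some finite submatrix has rank `r`. -/
def HankelRankEq (g : ℕ → ℝ) (r : ℕ) : Prop :=
  (∀ (p : ℕ) (ρ c : Fin p → ℕ), (hankelSub g ρ c).rank ≤ r) ∧
  (∃ ρ c : Fin r → ℕ, (hankelSub g ρ c).rank = r)

/-!
Let `L` be the linear functional on `ℝ[X]` with `L (X ^ n) = g n`. If `H(g)` is totally positive,
then the principal minors of `H(g)` and of the Hankel matrix of the shifted sequence are
nonnegative, so `L (p ^ 2)` and `L (X * p ^ 2)` are nonnegative. Finite rank gives some `p ≠ 0`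
with `L (p ^ 2) = 0`. By Cauchy–Schwarz the polynomials with this property form an ideal, which is
real, so by the real Nullstellensatz it is the vanishing ideal of a finite set `S`. Hence `L` is a
combination of evaluations at the points `x ∈ S`; testing it on the squares of the Lagrange basis
polynomials `ℓ x`, the weight of `x` is `w x = L (ℓ x ^ 2) > 0`, and
`x * w x = L (X * ℓ x ^ 2) ≥ 0`. The number of points equals the rank.

Conversely, a sum of exponentials factors `H(g)` as `Vᵀ * D * V` with `D` diagonal and positive.
By Cauchy–Binet it suffices that generalized Vandermonde determinants with increasing nonnegative
nodes are nonnegative. They do not vanish for distinct positive nodes, because by Descartes' rule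
of signs a polynomial with `n` terms has fewer than `n` positive roots; their sign follows by
moving the largest node to infinity, and nodes that coincide or are zero are handled by
continuity.
-/

open Polynomial

section Fewnomial

variable {ι R : Type*} [Fintype ι]

/-- The fewnomial `∑ i, a i * X ^ e i`. Descartes' rule of signs bounds its number of positive roots
in terms of the number of terms, whatever its degree. -/
noncomputable def fewnomial [Semiring R] (a : ι → R) (e : ι → ℕ) : R[X] :=
  ∑ i, C (a i) * X ^ e i

theorem coeff_fewnomial [Semiring R] (a : ι → R) {e : ι → ℕ} (he : e.Injective) (i : ι) :
    (fewnomial a e).coeff (e i) = a i := by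
  classical simp [fewnomial, finsetSum_coeff, coeff_X_pow, he.eq_iff]

theorem fewnomial_ne_zero [Semiring R] {a : ι → R} (ha : a ≠ 0) {e : ι → ℕ} (he : e.Injective) :
    fewnomial a e ≠ 0 := fun h => ha <| funext fun i => by
  rw [← coeff_fewnomial a he i, h, coeff_zero, Pi.zero_apply]

theorem eval_fewnomial [Semiring R] (a : ι → R) (e : ι → ℕ) (x : R) :
    (fewnomial a e).eval x = ∑ i, a i * x ^ e i := by
  simp [fewnomial, eval_finsetSum]

theorem card_support_fewnomial_le [Semiring R] (a : ι → R) (e : ι → ℕ) :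
    (fewnomial a e).support.card ≤ Fintype.card ι := by
  classical
  have hsub : (fewnomial a e).support ⊆ Finset.univ.image e := by
    intro k hk
    rw [mem_support_iff, fewnomial, finsetSum_coeff] at hk
    obtain ⟨i, hi, hki⟩ := Finset.exists_ne_zero_of_sum_ne_zero hk
    rw [coeff_C_mul_X_pow, ite_ne_right_iff] at hki
    exact Finset.mem_image.mpr ⟨i, hi, hki.1.symm⟩
  exact (Finset.card_le_card hsub).trans Finset.card_image_le

theorem leadingCoeff_fewnomial [Semiring R] {n : ℕ} {a : Fin (n + 1) → R} {e : Fin (n + 1) → ℕ}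
    (he : StrictMono e) (ha : a (Fin.last n) ≠ 0) :
    (fewnomial a e).leadingCoeff = a (Fin.last n) := by
  have hcoeff := coeff_fewnomial a he.injective (Fin.last n)
  have hdeg : (fewnomial a e).natDegree = e (Fin.last n) := by
    refine le_antisymm (natDegree_sum_le_of_forall_le _ _ fun j _ => ?_)
      (le_natDegree_of_ne_zero (hcoeff ▸ ha))
    exact (natDegree_C_mul_X_pow_le _ _).trans (he.monotone (Fin.le_last j))
  rw [leadingCoeff, hdeg, hcoeff]

theorem fewnomial_add_left [Semiring R] (a : ι → R) (e : ι → ℕ) (m : ℕ) :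
    fewnomial a (fun i => m + e i) = X ^ m * fewnomial a e := by
  simp only [fewnomial, Finset.mul_sum, pow_add, ← mul_assoc, X_pow_mul_C]

theorem fewnomial_coeff_self [Semiring R] (p : R[X]) :
    fewnomial (fun i : Fin (p.natDegree + 1) => p.coeff i) Fin.val = p :=
  (Fin.sum_univ_eq_sum_range (fun i => C (p.coeff i) * X ^ i) _).trans
    p.as_sum_range_C_mul_X_pow.symm

end Fewnomial

section RuleOfSigns

variable {R : Type*}

theorem signVariations_lt_card_support [Ring R] [LinearOrder R] {p : R[X]} (hp : p ≠ 0) :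
    p.signVariations < p.support.card := by
  induction hn : p.support.card using Nat.strong_induction_on generalizing p with
  | _ n ih =>
    have hcard := card_support_eraseLead_add_one hp
    by_cases h0 : p.eraseLead = 0
    · have hsign := signVariations_eq_eraseLead_add_ite hp
      simp only [h0, signVariations_zero, leadingCoeff_zero, sign_zero, neg_zero, sign_eq_zero_iff,
        leadingCoeff_eq_zero, hp, if_false] at hsign
      lia
    · have hlt := ih _ (by lia) h0 rfl
      have hle := signVariations_le_eraseLead_succ p
      lia

theorem card_lt_card_support_of_pos_roots [CommRing R] [LinearOrder R] [IsStrictOrderedRing R]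
    {p : R[X]} (hp : p ≠ 0) {T : Finset R} (hT : ∀ x ∈ T, 0 < x ∧ p.eval x = 0) :
    T.card < p.support.card := by
  have hle : T.val ≤ p.roots.filter (0 < ·) := by
    rw [Multiset.le_iff_subset T.nodup]
    exact fun x hx => Multiset.mem_filter.mpr ⟨(mem_roots hp).mpr (hT x hx).2, (hT x hx).1⟩
  calc T.card ≤ p.roots.countP (0 < ·) := by
        rw [Multiset.countP_eq_card_filter]
        exact Multiset.card_le_card hle
    _ ≤ p.signVariations := p.roots_countP_pos_le_signVariations
    _ < p.support.card := signVariations_lt_card_support hp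

end RuleOfSigns

theorem eval_pos_of_forall_ge_eval_ne_zero {p : ℝ[X]} (hlead : 0 < p.leadingCoeff) {y : ℝ}
    (hy : ∀ z ≥ y, p.eval z ≠ 0) : 0 < p.eval y := by
  by_contra! hneg
  rcases le_or_gt p.degree 0 with hdeg | hdeg
  · rw [eq_C_of_degree_le_zero hdeg] at hneg hlead
    rw [leadingCoeff_C] at hlead
    rw [eval_C] at hneg
    exact hneg.not_gt hlead
  · have htend := p.tendsto_atTop_of_leadingCoeff_nonneg hdeg hlead.le
    obtain ⟨b, hb, hyb⟩ :=
      ((htend.eventually_ge_atTop 0).and (Filter.eventually_ge_atTop y)).exists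
    obtain ⟨z, hz, hpz⟩ := intermediate_value_Icc hyb p.continuous.continuousOn ⟨hneg, hb⟩
    exact hy z hz.1 hpz

section GeneralizedVandermonde

/-- The generalized Vandermonde matrix `(x i ^ e j)` with nodes `x` and exponents `e`, through which
the Hankel matrix of a sum of exponentials factors. -/
def generalizedVandermonde {ι κ R : Type*} [Monoid R] (x : ι → R) (e : κ → ℕ) : Matrix ι κ R :=
  Matrix.of fun i j => x i ^ e j

theorem det_generalizedVandermonde_ne_zero {ι R : Type*} [Fintype ι] [DecidableEq ι] [CommRing R]
    [LinearOrder R] [IsStrictOrderedRing R] {x : ι → R} {e : ι → ℕ} (hx : ∀ i, 0 < x i)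
    (hx_inj : x.Injective) (he : e.Injective) : (generalizedVandermonde x e).det ≠ 0 := by
  intro hdet
  obtain ⟨a, ha, hker⟩ := Matrix.exists_mulVec_eq_zero_iff.mpr hdet
  have hroots : ∀ y ∈ Finset.univ.image x, 0 < y ∧ (fewnomial a e).eval y = 0 := by
    simp only [Finset.mem_image, Finset.mem_univ, true_and, forall_exists_index,
      forall_apply_eq_imp_iff]
    refine fun i => ⟨hx i, ?_⟩
    simpa [eval_fewnomial, generalizedVandermonde, Matrix.mulVec, dotProduct, mul_comm]
      using congrFun hker i
  refine (card_lt_card_support_of_pos_roots (fewnomial_ne_zero ha he) hroots).not_ge ?_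
  rw [Finset.card_image_of_injective _ hx_inj]
  exact card_support_fewnomial_le a e

theorem det_generalizedVandermonde_update {ι R : Type*} [Fintype ι] [DecidableEq ι] [CommRing R]
    (x : ι → R) (e : ι → ℕ) (i : ι) (z : R) :
    (generalizedVandermonde (Function.update x i z) e).det =
      (fewnomial (fun j => (generalizedVandermonde x e).adjugate j i) e).eval z := by
  have hrow : generalizedVandermonde (Function.update x i z) e =
      (generalizedVandermonde x e).updateRow i fun j => z ^ e j := by
    ext k j
    by_cases hk : k = i <;> simp [generalizedVandermonde, Function.update_apply,
      Matrix.updateRow_apply, hk]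
  rw [hrow, ← Matrix.cramer_transpose_apply, Matrix.cramer_eq_adjugate_mulVec,
    ← Matrix.adjugate_transpose, eval_fewnomial]
  rfl

theorem strictMono_update_last {n : ℕ} {α : Type*} [Preorder α] {x : Fin (n + 1) → α}
    (hx : StrictMono x) {z : α} (hz : x (Fin.last n) ≤ z) :
    StrictMono (Function.update x (Fin.last n) z) := by
  intro i j hij
  rw [Function.update_of_ne (hij.trans_le (Fin.le_last j)).ne]
  rcases eq_or_ne j (Fin.last n) with rfl | hj
  · rw [Function.update_self]
    exact (hx hij).trans_le hz
  · rw [Function.update_of_ne hj]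
    exact hx hij

theorem det_generalizedVandermonde_pos {n : ℕ} {x : Fin n → ℝ} {e : Fin n → ℕ} (hx : ∀ i, 0 < x i)
    (hx_mono : StrictMono x) (he : StrictMono e) : 0 < (generalizedVandermonde x e).det := by
  induction n with
  | zero => simp
  | succ n ih =>
    -- As a polynomial in the largest node, the determinant has the next smaller determinant as its
    -- leading coefficient and no roots beyond the other nodes.
    have hminor : 0 < (generalizedVandermonde x e).adjugate (Fin.last n) (Fin.last n) := by
      rw [Matrix.adjugate_fin_succ_eq_det_submatrix, Even.neg_one_pow ⟨_, rfl⟩, one_mul,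
        Fin.succAbove_last]
      exact ih (fun i => hx i.castSucc) (hx_mono.comp Fin.strictMono_castSucc)
        (he.comp Fin.strictMono_castSucc)
    have hlead := leadingCoeff_fewnomial
      (a := fun j => (generalizedVandermonde x e).adjugate j (Fin.last n)) he hminor.ne'
    have hdet := det_generalizedVandermonde_update x e (Fin.last n) (x (Fin.last n))
    rw [Function.update_eq_self] at hdet
    rw [hdet]
    refine eval_pos_of_forall_ge_eval_ne_zero ?_ fun z hz => ?_
    · rw [hlead]
      exact hminor
    · rw [← det_generalizedVandermonde_update]
      refine det_generalizedVandermonde_ne_zero (fun i => ?_)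
        (strictMono_update_last hx_mono hz).injective he.injective
      rcases eq_or_ne i (Fin.last n) with rfl | hi
      · rw [Function.update_self]
        exact (hx _).trans_le hz
      · rw [Function.update_of_ne hi]
        exact hx i

theorem det_generalizedVandermonde_nonneg {n : ℕ} {x : Fin n → ℝ} {e : Fin n → ℕ}
    (hx : ∀ i, 0 ≤ x i) (hx_mono : Monotone x) (he : StrictMono e) :
    0 ≤ (generalizedVandermonde x e).det := by
  let perturbed (ε : ℝ) (i : Fin n) : ℝ := x i + ε * (i + 1 : ℕ)
  have hcont : Continuous fun ε => (generalizedVandermonde (perturbed ε) e).det :=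
    Continuous.matrix_det <| continuous_matrix fun i j => by
      simp only [generalizedVandermonde, perturbed, Matrix.of_apply]
      fun_prop
  have htend := (hcont.tendsto 0).mono_left (nhdsWithin_le_nhds (s := Set.Ioi 0))
  have hzero : perturbed 0 = x := by simp [perturbed]
  rw [hzero] at htend
  refine ge_of_tendsto htend (Filter.mem_of_superset self_mem_nhdsWithin fun ε hε => ?_)
  rw [Set.mem_Ioi] at hε
  have hpos : ∀ i, 0 < perturbed ε i := fun i => add_pos_of_nonneg_of_pos (hx i) (by positivity)
  have hmono : StrictMono (perturbed ε) := fun i j hij =>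
    add_lt_add_of_le_of_lt (hx_mono hij.le) (by gcongr; exact hij)
  exact (det_generalizedVandermonde_pos hpos hmono he).le

theorem det_generalizedVandermonde_mul_det_nonneg {n : ℕ} {x : Fin n → ℝ} {ρ γ : Fin n → ℕ}
    (hx : ∀ i, 0 ≤ x i) (hρ : StrictMono ρ) (hγ : StrictMono γ) :
    0 ≤ (generalizedVandermonde x ρ).det * (generalizedVandermonde x γ).det := by
  let σ := Tuple.sort x
  have hsorted : ∀ e : Fin n → ℕ, StrictMono e →
      0 ≤ (Equiv.Perm.sign σ : ℝ) * (generalizedVandermonde x e).det := fun e he => by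
    rw [← Matrix.det_permute]
    exact det_generalizedVandermonde_nonneg (fun i => hx (σ i)) (Tuple.monotone_sort x) he
  have hsign : (Equiv.Perm.sign σ : ℝ) * (Equiv.Perm.sign σ : ℝ) = 1 := by
    rw [← Int.cast_mul, Int.units_coe_mul_self, Int.cast_one]
  calc 0 ≤ _ := mul_nonneg (hsorted ρ hρ) (hsorted γ hγ)
    _ = _ := by rw [mul_mul_mul_comm, hsign, one_mul]

end GeneralizedVandermonde

section CauchyBinet

variable {m n R : Type*} [Fintype m] [Fintype n] [DecidableEq n] [CommRing R]

theorem det_mul_eq_sum_prod_mul_det (A : Matrix n m R) (B : Matrix m n R) :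
    (A * B).det = ∑ f : n → m, (∏ i, A i (f i)) * (B.submatrix f id).det := by
  classical
  have hrows : A * B = fun i => ∑ k, A i k • B k := by
    ext i j
    simp [Matrix.mul_apply]
  rw [hrows]
  refine ((Matrix.detRowAlternating (R := R) (n := n)).toMultilinearMap.map_sum
    fun i k => A i k • B k).trans (Finset.sum_congr rfl fun f _ => ?_)
  exact MultilinearMap.map_smul_univ _ _ _

/-- The **Cauchy–Binet formula**, with the sum running over all maps `n → m` instead of over the
subsets of `m`: the non-injective maps contribute `0` and each subset occurs `|n|!` times. -/
theorem factorial_mul_det_mul (A : Matrix n m R) (B : Matrix m n R) :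
    ((Fintype.card n).factorial : R) * (A * B).det =
      ∑ f : n → m, (A.submatrix id f).det * (B.submatrix f id).det := by
  classical
  have hreindex : ∀ σ : Equiv.Perm n, (A * B).det = ∑ f : n → m,
      (Equiv.Perm.sign σ * ∏ i, A i (f (σ i))) * (B.submatrix f id).det := fun σ => by
    rw [det_mul_eq_sum_prod_mul_det, ← (σ.symm.arrowCongr (Equiv.refl m)).sum_comp]
    refine Finset.sum_congr rfl fun f _ => ?_
    have hperm : (B.submatrix (f ∘ σ) id).det =
        Equiv.Perm.sign σ * (B.submatrix f id).det := (B.submatrix f id).det_permute σ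
    change (∏ i, A i (f (σ i))) * (B.submatrix (f ∘ σ) id).det = _
    rw [hperm]
    ring
  calc ((Fintype.card n).factorial : R) * (A * B).det
      = ∑ _ : Equiv.Perm n, (A * B).det := by
        rw [Finset.sum_const, Finset.card_univ, Fintype.card_perm, nsmul_eq_mul]
    _ = ∑ f : n → m, ∑ σ : Equiv.Perm n,
          (Equiv.Perm.sign σ * ∏ i, A i (f (σ i))) * (B.submatrix f id).det := by
        rw [Finset.sum_congr rfl fun σ _ => hreindex σ, Finset.sum_comm]
    _ = ∑ f : n → m, (A.submatrix id f).det * (B.submatrix f id).det := by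
        refine Finset.sum_congr rfl fun f _ => ?_
        rw [← Finset.sum_mul, ← Matrix.det_transpose (A.submatrix id f),
          Matrix.det_apply' (A.submatrix id f)ᵀ]
        rfl

theorem det_mul_nonneg_of_det_submatrix_mul_nonneg [LinearOrder R] [IsStrictOrderedRing R]
    {A : Matrix n m R} {B : Matrix m n R}
    (h : ∀ f : n → m, 0 ≤ (A.submatrix id f).det * (B.submatrix f id).det) :
    0 ≤ (A * B).det := by
  refine nonneg_of_mul_nonneg_right ?_ (Nat.cast_pos.mpr (Fintype.card n).factorial_pos)
  exact (factorial_mul_det_mul A B).symm ▸ Finset.sum_nonneg fun f _ => h f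

end CauchyBinet

section PrincipalMinors

variable {n : Type*} [DecidableEq n]

theorem charpoly_neg_coeff_nonneg [Fintype n] {R : Type*} [CommRing R] [PartialOrder R]
    [IsOrderedRing R] {M : Matrix n n R}
    (h : ∀ s : Finset n, 0 ≤ (M.submatrix (Subtype.val : s → n) Subtype.val).det) (k : ℕ) :
    0 ≤ (-M).charpoly.coeff k := by
  nontriviality R
  rcases lt_or_ge (Fintype.card n) k with hk | hk
  · rw [coeff_eq_zero_of_natDegree_lt (by rwa [Matrix.charpoly_natDegree_eq_dim])]
  obtain ⟨j, hj, rfl⟩ : ∃ j ≤ Fintype.card n, Fintype.card n - j = k :=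
    ⟨Fintype.card n - k, Nat.sub_le _ _, Nat.sub_sub_self hk⟩
  rw [Matrix.charpoly_coeff_eq_sum_minors _ _ hj, Finset.mul_sum]
  refine Finset.sum_nonneg fun s hs => ?_
  rw [Matrix.submatrix_neg, Pi.neg_apply, Pi.neg_apply, Matrix.det_neg, Fintype.card_coe,
    (Finset.mem_powersetCard.mp hs).2, ← mul_assoc, ← mul_pow, neg_one_mul, neg_neg, one_pow,
    one_mul]
  exact h s

theorem eval_pos_of_monic_of_coeff_nonneg {R : Type*} [CommSemiring R] [PartialOrder R]
    [IsStrictOrderedRing R] {p : R[X]} (hp : p.Monic) (hcoeff : ∀ k, 0 ≤ p.coeff k) {t : R}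
    (ht : 0 < t) : 0 < p.eval t := by
  rw [eval_eq_sum_range]
  refine Finset.sum_pos' (fun k _ => mul_nonneg (hcoeff k) (pow_nonneg ht.le k))
    ⟨p.natDegree, Finset.self_mem_range_succ _, ?_⟩
  rw [hp.coeff_natDegree, one_mul]
  exact pow_pos ht _

open ComplexOrder in
theorem posSemidef_of_principal_minors_nonneg [Finite n] {𝕜 : Type*} [RCLike 𝕜]
    {M : Matrix n n 𝕜} (hM : M.IsHermitian)
    (h : ∀ s : Finset n, 0 ≤ (M.submatrix (Subtype.val : s → n) Subtype.val).det) :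
    M.PosSemidef := by
  have := Fintype.ofFinite n
  rw [hM.posSemidef_iff_eigenvalues_nonneg]
  intro i
  rw [Pi.zero_apply]
  by_contra! hneg
  have hpos : 0 < (-M).charpoly.eval ((-hM.eigenvalues i : ℝ) : 𝕜) :=
    eval_pos_of_monic_of_coeff_nonneg (-M).charpoly_monic (charpoly_neg_coeff_nonneg h)
      (RCLike.ofReal_pos.mpr (neg_pos.mpr hneg))
  refine hpos.ne' ?_
  have hroot : M.charpoly.eval (hM.eigenvalues i : 𝕜) = 0 := by
    rw [hM.charpoly_eq, eval_prod]
    exact Finset.prod_eq_zero (Finset.mem_univ i) (by simp)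
  rw [Matrix.eval_charpoly] at hroot
  rw [Matrix.eval_charpoly, RCLike.ofReal_neg, map_neg, neg_sub_neg, ← neg_sub, Matrix.det_neg,
    hroot, mul_zero]

end PrincipalMinors

section RealIdeal

variable {K : Type*} [Field K]

theorem not_sq_add_sq_dvd {P : K[X]} (hP : P ≠ 0) (hreal : ∀ p q, P ∣ p * p + q * q → P ∣ p)
    (a b : K) : ¬ (X - C a) ^ 2 + C b ^ 2 ∣ P := by
  rintro ⟨Q, hQ⟩
  have hQ0 : Q ≠ 0 := right_ne_zero_of_mul (hQ ▸ hP)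
  have hdvd : P ∣ (X - C a) * Q := hreal _ (C b * Q) ⟨Q, by rw [hQ]; ring⟩
  have hle := natDegree_le_of_dvd hdvd (mul_ne_zero (X_sub_C_ne_zero a) hQ0)
  have hdeg : ((X - C a) ^ 2 + C b ^ 2).natDegree = 2 := by compute_degree!
  rw [hQ, natDegree_mul (ne_zero_of_natDegree_gt (hdeg ▸ two_pos)) hQ0, hdeg,
    natDegree_mul (X_sub_C_ne_zero a) hQ0, natDegree_X_sub_C] at hle
  lia

theorem nodup_roots_of_real {P : K[X]} (hP : P ≠ 0) (hreal : ∀ p q, P ∣ p * p + q * q → P ∣ p) :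
    P.roots.Nodup := by
  classical
  rw [Multiset.nodup_iff_count_le_one]
  intro a
  by_contra! h
  rw [count_roots] at h
  refine not_sq_add_sq_dvd hP hreal a 0 ?_
  simpa using (pow_dvd_pow _ h).trans (P.pow_rootMultiplicity_dvd a)

theorem splits_of_real {P : ℝ[X]} (hP : P ≠ 0) (hreal : ∀ p q, P ∣ p * p + q * q → P ∣ p) :
    P.Splits := by
  refine Splits.of_splits_map (algebraMap ℝ ℂ) (IsAlgClosed.splits _) fun z hz => ?_
  rw [← aroots_def, mem_aroots] at hz
  refine ⟨z.re, Complex.ext rfl ?_⟩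
  by_contra! him
  refine not_sq_add_sq_dvd hP hreal z.re z.im ?_
  convert P.quadratic_dvd_of_aeval_eq_zero_im_ne_zero hz.2 (Ne.symm him) using 1
  rw [Complex.sq_norm, Complex.normSq_apply]
  simp only [C_mul, C_add, C_ofNat]
  ring

theorem exists_finset_forall_mem_iff_eval_eq_zero {I : Ideal ℝ[X]} (hI : I ≠ ⊥)
    (hreal : ∀ p q, p * p + q * q ∈ I → p ∈ I) :
    ∃ S : Finset ℝ, ∀ p, p ∈ I ↔ ∀ x ∈ S, p.eval x = 0 := by
  obtain ⟨P, rfl⟩ := IsPrincipalIdealRing.principal I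
  rw [Ideal.submodule_span_eq] at hI hreal ⊢
  simp only [Ideal.mem_span_singleton] at hreal ⊢
  have hP : P ≠ 0 := fun h => hI (Ideal.span_singleton_eq_bot.mpr h)
  have hnodup := nodup_roots_of_real hP hreal
  refine ⟨P.roots.toFinset, fun p => ⟨fun hdvd x hx => ?_, fun hp => ?_⟩⟩
  · exact eval_eq_zero_of_dvd_of_eval_eq_zero hdvd
      (isRoot_of_mem_roots (Multiset.mem_toFinset.mp hx))
  · rcases eq_or_ne p 0 with rfl | hp0
    · exact dvd_zero P
    · refine (splits_of_real hP hreal).dvd_of_roots_le_roots hP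
        ((Multiset.le_iff_subset hnodup).mpr fun x hx => ?_)
      exact (mem_roots hp0).mpr (hp x (Multiset.mem_toFinset.mpr hx))

end RealIdeal

section Quadrature

section NullIdeal

variable {K A : Type*} [CommRing K] [CommRing A] [Algebra K A]

/-- The null ideal `{p | ∀ q, L (p * q) = 0}` of a linear functional `L`: the radical of the
bilinear form `(p, q) ↦ L (p * q)`. For a positive functional on `ℝ[X]` it is the vanishing ideal
of the support of the representing measure. -/
def nullIdeal (L : A →ₗ[K] K) : Ideal A where
  __ := LinearMap.ker ((LinearMap.mul K A).compr₂ L)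
  smul_mem' a p hp := LinearMap.ext fun q => by
    simpa [mul_left_comm, mul_assoc] using LinearMap.congr_fun hp (a * q)

theorem mem_nullIdeal_iff {L : A →ₗ[K] K} {p : A} : p ∈ nullIdeal L ↔ ∀ q, L (p * q) = 0 :=
  LinearMap.ext_iff

variable [LinearOrder K] [IsStrictOrderedRing K] {L : A →ₗ[K] K}

theorem mem_nullIdeal_iff_map_mul_self_eq_zero (hL : ∀ p, 0 ≤ L (p * p)) {p : A} :
    p ∈ nullIdeal L ↔ L (p * p) = 0 :=
  (LinearMap.BilinForm.apply_apply_same_eq_zero_iff ((LinearMap.mul K A).compr₂ L) hL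
    ⟨fun p q => congrArg L (mul_comm p q)⟩).symm

theorem mem_nullIdeal_of_mul_self_add_mul_self_mem (hL : ∀ p, 0 ≤ L (p * p)) {p q : A}
    (h : p * p + q * q ∈ nullIdeal L) : p ∈ nullIdeal L := by
  have hsum := mem_nullIdeal_iff.mp h 1
  rw [mul_one, map_add] at hsum
  rw [mem_nullIdeal_iff_map_mul_self_eq_zero hL]
  exact ((add_eq_zero_iff_of_nonneg (hL p) (hL q)).mp hsum).1

end NullIdeal

theorem eq_sum_lagrange_basis {K : Type*} [Field K] [DecidableEq K] {L : K[X] →ₗ[K] K}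
    {S : Finset K} (hS : ∀ p, (∀ x ∈ S, p.eval x = 0) → L p = 0) (p : K[X]) :
    L p = ∑ x ∈ S, L (Lagrange.basis S id x) * p.eval x := by
  have hvanish := hS (p - Lagrange.interpolate S id fun x => p.eval x) fun x hx => by
    rw [eval_sub, sub_eq_zero]
    exact (Lagrange.eval_interpolate_at_node (v := id) (fun x => p.eval x)
      Function.injective_id.injOn hx).symm
  rw [map_sub, sub_eq_zero, Lagrange.interpolate_apply, map_sum] at hvanish
  rw [hvanish]
  refine Finset.sum_congr rfl fun x _ => ?_
  rw [← smul_eq_C_mul, map_smul, smul_eq_mul, mul_comm]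

theorem map_mul_lagrange_basis_mul_self {K : Type*} [Field K] [DecidableEq K] {L : K[X] →ₗ[K] K}
    {S : Finset K} {w : K → K} (hL : ∀ p, L p = ∑ y ∈ S, w y * p.eval y) (p : K[X]) {x : K}
    (hx : x ∈ S) :
    L (p * (Lagrange.basis S id x * Lagrange.basis S id x)) = w x * p.eval x := by
  have hself : (Lagrange.basis S id x).eval x = 1 :=
    Lagrange.eval_basis_self (v := id) Function.injective_id.injOn hx
  rw [hL, Finset.sum_eq_single_of_mem x hx fun y hy hyx => ?_]
  · rw [eval_mul, eval_mul, hself, mul_one, mul_one]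
  · have hne : (Lagrange.basis S id x).eval y = 0 :=
      Lagrange.eval_basis_of_ne (v := id) hyx.symm hy
    rw [eval_mul, eval_mul, hne, mul_zero, mul_zero, mul_zero]

theorem exists_quadrature {L : ℝ[X] →ₗ[ℝ] ℝ} (hL : ∀ p, 0 ≤ L (p * p))
    (hLX : ∀ p, 0 ≤ L (X * (p * p))) (hdeg : ∃ p ≠ 0, L (p * p) = 0) :
    ∃ (S : Finset ℝ) (w : ℝ → ℝ), (∀ x ∈ S, 0 ≤ x ∧ 0 < w x) ∧
      ∀ p, L p = ∑ x ∈ S, w x * p.eval x := by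
  have hbot : nullIdeal L ≠ ⊥ := by
    obtain ⟨p, hp, hpp⟩ := hdeg
    exact (Submodule.ne_bot_iff _).mpr
      ⟨p, (mem_nullIdeal_iff_map_mul_self_eq_zero hL).mpr hpp, hp⟩
  obtain ⟨S, hS⟩ := exists_finset_forall_mem_iff_eval_eq_zero hbot fun p q =>
    mem_nullIdeal_of_mul_self_add_mul_self_mem hL
  let w x := L (Lagrange.basis S id x)
  have hquad : ∀ p, L p = ∑ x ∈ S, w x * p.eval x := eq_sum_lagrange_basis fun p hp => by
    simpa only [mul_one] using mem_nullIdeal_iff.mp ((hS p).mpr hp) 1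
  refine ⟨S, w, fun x hx => ?_, hquad⟩
  have hpos : 0 < w x := by
    have hsq : L (Lagrange.basis S id x * Lagrange.basis S id x) = w x := by
      simpa only [one_mul, eval_one, mul_one] using map_mul_lagrange_basis_mul_self hquad 1 hx
    refine (hsq ▸ hL _).lt_of_ne' fun hzero => ?_
    rw [hzero, ← mem_nullIdeal_iff_map_mul_self_eq_zero hL, hS] at hsq
    have hself : (Lagrange.basis S id x).eval x = 1 :=
      Lagrange.eval_basis_self (v := id) Function.injective_id.injOn hx
    exact one_ne_zero (hself.symm.trans (hsq x hx))
  refine ⟨nonneg_of_mul_nonneg_right ?_ hpos, hpos⟩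
  simpa only [map_mul_lagrange_basis_mul_self hquad X hx, eval_X] using
    hLX (Lagrange.basis S id x)

end Quadrature

section Moments

/-- The Riesz functional of the moment sequence `g`, i.e. the linear functional on polynomials with
`L (X ^ n) = g n`; `H(g)` is the Gram matrix of `(p, q) ↦ L (p * q)` on the monomials. -/
noncomputable def momentFunctional {R : Type*} [CommSemiring R] (g : ℕ → R) : R[X] →ₗ[R] R :=
  (Polynomial.basisMonomials R).constr R g

theorem momentFunctional_X_pow {R : Type*} [CommSemiring R] (g : ℕ → R) (n : ℕ) :
    momentFunctional g (X ^ n) = g n := by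
  simpa only [coe_basisMonomials, monomial_one_right_eq_X_pow, momentFunctional] using
    (Polynomial.basisMonomials R).constr_basis R g n

variable {g : ℕ → ℝ}

theorem momentFunctional_fewnomial_mul_fewnomial {N : ℕ} (v w : Fin N → ℝ) (ρ γ : Fin N → ℕ) :
    momentFunctional g (fewnomial v ρ * fewnomial w γ) = v ⬝ᵥ hankelSub g ρ γ *ᵥ w := by
  rw [fewnomial, fewnomial, Finset.sum_mul_sum]
  simp only [map_sum, dotProduct, Matrix.mulVec, Finset.mul_sum]
  refine Finset.sum_congr rfl fun i _ => Finset.sum_congr rfl fun j _ => ?_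
  rw [mul_mul_mul_comm, ← C_mul, ← pow_add, ← smul_eq_C_mul, map_smul, momentFunctional_X_pow,
    smul_eq_mul, hankelSub, Matrix.of_apply]
  ring

theorem exists_ne_zero_momentFunctional_mul_self_eq_zero {N : ℕ} {ρ : Fin N → ℕ}
    (hρ : ρ.Injective) (h : (hankelSub g ρ ρ).det = 0) :
    ∃ p ≠ 0, momentFunctional g (p * p) = 0 := by
  obtain ⟨v, hv, hker⟩ := Matrix.exists_mulVec_eq_zero_iff.mpr h
  refine ⟨fewnomial v ρ, fewnomial_ne_zero hv hρ, ?_⟩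
  rw [momentFunctional_fewnomial_mul_fewnomial, hker, dotProduct_zero]

theorem HankelTotallyPositive.posSemidef (hg : HankelTotallyPositive g) (m : ℕ) {N : ℕ}
    {ρ : Fin N → ℕ} (hρ : StrictMono ρ) : (hankelSub g (fun i => m + ρ i) ρ).PosSemidef := by
  refine posSemidef_of_principal_minors_nonneg ?_ fun s => ?_
  · ext i j
    simp [hankelSub, add_right_comm]
  · have hs : StrictMono (ρ ∘ s.orderEmbOfFin rfl) := hρ.comp (s.orderEmbOfFin rfl).strictMono
    rw [← Matrix.det_submatrix_equiv_self (s.orderIsoOfFin rfl).toEquiv]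
    exact hg _ _ _ (hs.const_add m) hs

theorem HankelTotallyPositive.momentFunctional_nonneg (hg : HankelTotallyPositive g) (m : ℕ)
    (p : ℝ[X]) : 0 ≤ momentFunctional g (X ^ m * (p * p)) := by
  have hsemi := (hg.posSemidef m Fin.val_strictMono).dotProduct_mulVec_nonneg
    fun i : Fin (p.natDegree + 1) => p.coeff i
  rw [star_trivial, ← momentFunctional_fewnomial_mul_fewnomial, fewnomial_add_left,
    fewnomial_coeff_self, mul_assoc] at hsemi
  exact hsemi

theorem HankelTotallyPositive.exists_eq_sum_pow (hg : HankelTotallyPositive g) {N : ℕ}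
    {ρ : Fin N → ℕ} (hρ : ρ.Injective) (hdet : (hankelSub g ρ ρ).det = 0) :
    ∃ (m : ℕ) (c lam : Fin m → ℝ), (∀ i, 0 < c i) ∧ StrictAnti lam ∧ (∀ i, 0 ≤ lam i) ∧
      ∀ t, g t = ∑ i, c i * lam i ^ t := by
  obtain ⟨S, w, hS, hquad⟩ := exists_quadrature
    (fun p => by simpa only [pow_zero, one_mul] using hg.momentFunctional_nonneg 0 p)
    (fun p => by simpa only [pow_one] using hg.momentFunctional_nonneg 1 p)
    (exists_ne_zero_momentFunctional_mul_self_eq_zero hρ hdet)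
  let node : Fin S.card ≃ S := Fin.revPerm.trans (S.orderIsoOfFin rfl).toEquiv
  refine ⟨S.card, fun i => w (node i), fun i => node i, fun i => (hS _ (node i).2).2,
    (S.orderIsoOfFin rfl).strictMono.comp_strictAnti Fin.rev_strictAnti,
    fun i => (hS _ (node i).2).1, fun t => ?_⟩
  rw [node.sum_comp fun x : S => w x * (x : ℝ) ^ t, Finset.sum_coe_sort S fun x => w x * x ^ t,
    ← momentFunctional_X_pow g, hquad]
  simp only [eval_pow, eval_X]

end Moments

section ExponentialSums

variable {m : ℕ} {g : ℕ → ℝ} {c lam : Fin m → ℝ}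

theorem hankelSub_eq_mul {p : ℕ} (hg : ∀ t, g t = ∑ i, c i * lam i ^ t) (ρ γ : Fin p → ℕ) :
    hankelSub g ρ γ = (generalizedVandermonde lam ρ)ᵀ *
      (Matrix.diagonal c * generalizedVandermonde lam γ) := by
  ext i j
  rw [Matrix.mul_apply]
  simp only [hankelSub, generalizedVandermonde, hg, Matrix.diagonal_mul, Matrix.transpose_apply,
    Matrix.of_apply, pow_add, mul_left_comm]

theorem hankelTotallyPositive_of_eq_sum_pow (hc : ∀ i, 0 ≤ c i) (hlam : ∀ i, 0 ≤ lam i)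
    (hg : ∀ t, g t = ∑ i, c i * lam i ^ t) : HankelTotallyPositive g := by
  intro p ρ γ hρ hγ
  rw [hankelSub_eq_mul hg]
  refine det_mul_nonneg_of_det_submatrix_mul_nonneg fun f => ?_
  have hleft : (generalizedVandermonde lam ρ)ᵀ.submatrix id f =
      (generalizedVandermonde (lam ∘ f) ρ)ᵀ := rfl
  have hright : (Matrix.diagonal c * generalizedVandermonde lam γ).submatrix f id =
      Matrix.diagonal (c ∘ f) * generalizedVandermonde (lam ∘ f) γ := by
    ext i j
    simp [generalizedVandermonde]
  rw [hleft, hright, Matrix.det_transpose, Matrix.det_mul, Matrix.det_diagonal, mul_left_comm]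
  exact mul_nonneg (Finset.prod_nonneg fun i _ => hc (f i))
    (det_generalizedVandermonde_mul_det_nonneg (fun i => hlam (f i)) hρ hγ)

theorem HankelRankEq.det_eq_zero {r p : ℕ} (h : HankelRankEq g r) (hp : r < p)
    (ρ γ : Fin p → ℕ) : (hankelSub g ρ γ).det = 0 := by
  by_contra hdet
  have hrank := Matrix.rank_of_isUnit (hankelSub g ρ γ)
    ((Matrix.isUnit_iff_isUnit_det _).mpr (isUnit_iff_ne_zero.mpr hdet))
  rw [Fintype.card_fin] at hrank
  exact hp.not_ge (hrank.symm.trans_le (h.1 p ρ γ))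

theorem HankelRankEq.eq_of_eq_sum_pow {r : ℕ} (h : HankelRankEq g r) (hc : ∀ i, c i ≠ 0)
    (hlam : lam.Injective) (hg : ∀ t, g t = ∑ i, c i * lam i ^ t) : m = r := by
  refine le_antisymm (not_lt.mp fun hlt => ?_) ?_
  · have hdet := h.det_eq_zero hlt Fin.val Fin.val
    rw [hankelSub_eq_mul hg, Matrix.det_mul, Matrix.det_mul, Matrix.det_transpose,
      Matrix.det_diagonal] at hdet
    have hvandermonde : (generalizedVandermonde lam Fin.val).det ≠ 0 :=
      Matrix.det_vandermonde_ne_zero_iff.mpr hlam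
    exact mul_ne_zero hvandermonde
      (mul_ne_zero (Finset.prod_ne_zero_iff.mpr fun i _ => hc i) hvandermonde) hdet
  · obtain ⟨ρ, γ, hr⟩ := h.2
    calc r = (hankelSub g ρ γ).rank := hr.symm
      _ ≤ (generalizedVandermonde lam ρ)ᵀ.rank := by
        rw [hankelSub_eq_mul hg]
        exact Matrix.rank_mul_le_left _ _
      _ ≤ m := Matrix.rank_le_width _

end ExponentialSums

/-- A Hankel matrix of finite rank `r ≥ 1` is totally positive if and only if
`g(t) = ∑_{i=1}^r c_i λ_i^{t-1}` with `c_i > 0` and `λ_1 > … > λ_r ≥ 0`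
(here `g t` stands for `g(t+1)`, whence the exponent `t`). -/
theorem hankel_totally_positive_iff_sum_of_decaying_exponentials
    (g : ℕ → ℝ) (r : ℕ) (hr : 1 ≤ r) (hrank : HankelRankEq g r) :
    HankelTotallyPositive g ↔
      ∃ c lam : Fin r → ℝ, (∀ i, 0 < c i) ∧ StrictAnti lam ∧ (∀ i, 0 ≤ lam i) ∧
        ∀ t : ℕ, g t = ∑ i, c i * lam i ^ t := by
  refine ⟨fun hg => ?_, fun ⟨c, lam, hc, _, hlam, hsum⟩ =>
    hankelTotallyPositive_of_eq_sum_pow (fun i => (hc i).le) hlam hsum⟩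
  obtain ⟨m, c, lam, hc, hanti, hlam, hsum⟩ := hg.exists_eq_sum_pow Fin.val_injective
    (hrank.det_eq_zero r.lt_succ_self Fin.val Fin.val)
  obtain rfl := hrank.eq_of_eq_sum_pow (fun i => (hc i).ne') hanti.injective hsum
  exact ⟨c, lam, hc, hanti, hlam, hsum⟩
end
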